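/- Fix R > 0 and a ∈ (0,1]. For each n, let σₙ be the uniform (normalized surface) probability measure on the sphere {x ∈ ℝⁿ : ‖x‖ = R}, and let Sₙ : ℝⁿ → ℝ be the partial-sum map Sₙ(x) = x₁ + x₂ + ⋯ + x_{⌊na⌋}. Then the pushforward measures (Sₙ)_*σₙ converge weakly, as n → ∞, to the Gaussian measure on ℝ with mean 0 and variance aR². -/

import Mathlib

open MeasureTheory ProbabilityTheory Filter

namespace LevySphere

lemma cos_sub_exp_le (u : ℝ) : |Real.cos u - Real.exp (-(u ^ 2) / 2)| ≤ 2 * u ^ 4 := by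
  by_cases hu : |u| ≤ 1
  · have h1 := Real.cos_bound hu
    have hu2 : u ^ 2 ≤ 1 := by
      rw [← sq_abs]; exact pow_le_one₀ (abs_nonneg u) hu
    have h2 := Real.abs_exp_sub_one_sub_id_le (x := -(u ^ 2) / 2) (by
      rw [abs_le]; constructor <;> nlinarith [sq_nonneg u])
    have h4 : |u| ^ 4 = u ^ 4 := Even.pow_abs (by decide) u
    rw [h4] at h1
    rw [abs_le] at *
    have : 0 ≤ u ^ 4 := by positivity
    constructor <;> nlinarith
  · have hu1 : 1 ≤ u ^ 4 := by
      rw [← Even.pow_abs (by decide) u]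
      exact one_le_pow₀ (le_of_lt (not_le.mp hu))
    have h1 := Real.cos_le_one u
    have h2 := Real.neg_one_le_cos u
    have h3 := Real.exp_pos (-(u ^ 2) / 2)
    have h4 : Real.exp (-(u ^ 2) / 2) ≤ 1 := Real.exp_le_one_iff.mpr (by nlinarith [sq_nonneg u])
    rw [abs_le]
    constructor <;> linarith

lemma prod_diff_le {ι : Type*} (s : Finset ι) (f g : ι → ℝ) (hf : ∀ i, |f i| ≤ 1)
    (hg : ∀ i, |g i| ≤ 1) : |∏ i ∈ s, f i - ∏ i ∈ s, g i| ≤ ∑ i ∈ s, |f i - g i| := by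
  classical
  induction s using Finset.induction_on with
  | empty => simp
  | insert a s ha ih =>
    rw [Finset.prod_insert ha, Finset.prod_insert ha, Finset.sum_insert ha]
    have e : f a * ∏ i ∈ s, f i - g a * ∏ i ∈ s, g i =
      f a * (∏ i ∈ s, f i - ∏ i ∈ s, g i) + (f a - g a) * ∏ i ∈ s, g i := by ring
    rw [e]
    refine (abs_add_le _ _).trans ?_
    rw [abs_mul, abs_mul]
    have hp : |∏ i ∈ s, g i| ≤ 1 := by
      rw [Finset.abs_prod]
      exact Finset.prod_le_one (fun i _ => abs_nonneg _) (fun i _ => hg i)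
    nlinarith [abs_nonneg (f a - g a), abs_nonneg (∏ i ∈ s, f i - ∏ i ∈ s, g i), hf a]

lemma prod_cos_sub_le {n : ℕ} (s R : ℝ) (x : EuclideanSpace ℝ (Fin n)) (hx : ‖x‖ = R) :
    |∏ i, Real.cos (s * x i) - Real.exp (-(s ^ 2 * R ^ 2) / 2)| ≤ 2 * s ^ 4 * ∑ i, x i ^ 4 := by
  have e : Real.exp (-(s ^ 2 * R ^ 2) / 2) = ∏ i, Real.exp (-((s * x i) ^ 2) / 2) := by
    rw [← Real.exp_sum, ← hx, EuclideanSpace.real_norm_sq_eq]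
    congr 1
    rw [Finset.mul_sum, ← Finset.sum_neg_distrib, Finset.sum_div]
    exact Finset.sum_congr rfl fun i _ => by ring
  rw [e]
  refine (prod_diff_le _ _ _ (fun i => Real.abs_cos_le_one _) (fun i => ?_)).trans ?_
  · rw [abs_of_pos (Real.exp_pos _)]
    exact Real.exp_le_one_iff.mpr (by nlinarith [sq_nonneg (s * x i)])
  · rw [Finset.mul_sum]
    refine Finset.sum_le_sum fun i _ => (cos_sub_exp_le _).trans (le_of_eq (by ring))

section

variable {n : ℕ} {R : ℝ} {μ : Measure (EuclideanSpace ℝ (Fin n))}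

lemma ae_norm (hs : μ (Metric.sphere (0 : EuclideanSpace ℝ (Fin n)) R)ᶜ = 0) :
    ∀ᵐ x ∂μ, ‖x‖ = R := by
  have : ∀ᵐ x ∂μ, x ∈ Metric.sphere (0 : EuclideanSpace ℝ (Fin n)) R := hs
  filter_upwards [this] with x hx
  simpa using hx

lemma integrable_cont {F : Type*} [NormedAddCommGroup F] [SecondCountableTopology F]
    [IsFiniteMeasure μ]
    (hs : μ (Metric.sphere (0 : EuclideanSpace ℝ (Fin n)) R)ᶜ = 0)
    {f : EuclideanSpace ℝ (Fin n) → F} (hf : Continuous f) : Integrable f μ := by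
  obtain ⟨C, hC⟩ := (isCompact_sphere (0 : EuclideanSpace ℝ (Fin n)) R).exists_bound_of_continuousOn
    hf.continuousOn
  refine Integrable.of_bound hf.aestronglyMeasurable C ?_
  filter_upwards [ae_norm hs] with x hx
  exact hC x (by simpa using hx)

lemma integral_inner_eq
    (hrot : ∀ O : EuclideanSpace ℝ (Fin n) ≃ₗᵢ[ℝ] EuclideanSpace ℝ (Fin n), Measure.map O μ = μ)
    {u w : EuclideanSpace ℝ (Fin n)} (h : ‖u‖ = ‖w‖) (f : ℝ → ℂ) :
    ∫ x, f (inner ℝ w x) ∂μ = ∫ x, f (inner ℝ u x) ∂μ := by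
  set O := Submodule.reflection (ℝ ∙ (u - w))ᗮ with hO
  have hu : O u = w := Submodule.reflection_sub h
  conv_lhs => rw [← hrot O]
  have : MeasurableEmbedding O := O.toHomeomorph.measurableEmbedding
  rw [this.integral_map]
  congr 1
  ext x
  rw [← hu, LinearIsometryEquiv.inner_map_map]

/-- Sign value. -/
def sg (b : Bool) : ℝ := if b then 1 else -1

lemma sum_sign (z : ℂ) (x : EuclideanSpace ℝ (Fin n)) :
    ∑ e : Fin n → Bool, Complex.exp (z * ((∑ i, sg (e i) * x i : ℝ) : ℂ)) =
      2 ^ n * ∏ i, Complex.cosh (z * x i) := by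
  have h := Finset.prod_univ_sum (ι := Fin n) (fun _ => (Finset.univ : Finset Bool))
    (fun i b => Complex.exp (z * ((sg b * x i : ℝ) : ℂ)))
  rw [Fintype.piFinset_univ] at h
  have h2 : ∀ e : Fin n → Bool, Complex.exp (z * ((∑ i, sg (e i) * x i : ℝ) : ℂ)) =
      ∏ i, Complex.exp (z * ((sg (e i) * x i : ℝ) : ℂ)) := by
    intro e
    rw [← Complex.exp_sum, ← Finset.mul_sum]
    push_cast
    rfl
  rw [Finset.sum_congr rfl fun e _ => h2 e, ← h]
  have h3 : ∀ i, ∑ b : Bool, Complex.exp (z * ((sg b * x i : ℝ) : ℂ)) =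
      2 * Complex.cosh (z * x i) := by
    intro i
    rw [Complex.two_cosh]
    simp [sg]
  rw [Finset.prod_congr rfl fun i _ => h3 i, Finset.prod_mul_distrib]
  simp

lemma integral_exp_eq [IsFiniteMeasure μ]
    (hs : μ (Metric.sphere (0 : EuclideanSpace ℝ (Fin n)) R)ᶜ = 0)
    (hrot : ∀ O : EuclideanSpace ℝ (Fin n) ≃ₗᵢ[ℝ] EuclideanSpace ℝ (Fin n), Measure.map O μ = μ)
    (s : ℝ) {u : EuclideanSpace ℝ (Fin n)} (hu : ‖u‖ ^ 2 = s ^ 2 * n) (z : ℂ) :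
    ∫ x, Complex.exp (z * (inner ℝ u x : ℝ)) ∂μ =
      ∫ x, ∏ i, Complex.cosh (z * s * x i) ∂μ := by
  have h1 : ∀ e : Fin n → Bool,
      ∫ x, Complex.exp (z * (inner ℝ u x : ℝ)) ∂μ =
      ∫ x, Complex.exp (z * s * ((∑ i, sg (e i) * x i : ℝ) : ℂ)) ∂μ := by
    intro e
    have hn : ‖(WithLp.toLp 2 (fun i => s * sg (e i)) : EuclideanSpace ℝ (Fin n))‖ = ‖u‖ := by
      rw [← sq_eq_sq₀ (norm_nonneg _) (norm_nonneg _), hu, EuclideanSpace.real_norm_sq_eq]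
      have : ∀ i, (s * sg (e i)) ^ 2 = s ^ 2 := by
        intro i
        unfold sg
        split_ifs <;> ring
      simp [this]
      ring
    rw [integral_inner_eq hrot hn (fun y => Complex.exp (z * y))]
    congr 1
    ext x
    congr 1
    rw [mul_assoc]
    congr 1
    rw [← Complex.ofReal_mul, Finset.mul_sum]
    congr 1
    rw [PiLp.inner_apply]
    refine Finset.sum_congr rfl fun i _ => ?_
    simp
    ring
  have h2 : (2 ^ n : ℂ) * ∫ x, Complex.exp (z * (inner ℝ u x : ℝ)) ∂μ =
      2 ^ n * ∫ x, ∏ i, Complex.cosh (z * s * x i) ∂μ := by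
    rw [← integral_const_mul (2 ^ n : ℂ) (fun x : EuclideanSpace ℝ (Fin n) => ∏ i, Complex.cosh (z * s * x i))]
    simp_rw [← sum_sign]
    rw [integral_finsetSum]
    · rw [← Finset.sum_congr rfl fun e _ => h1 e]
      simp
    · intro e _
      exact integrable_cont hs (by fun_prop)
  exact mul_left_cancel₀ (pow_ne_zero n two_ne_zero) h2

lemma integral_rexp_le [IsProbabilityMeasure μ]
    (hs : μ (Metric.sphere (0 : EuclideanSpace ℝ (Fin n)) R)ᶜ = 0)
    (hrot : ∀ O : EuclideanSpace ℝ (Fin n) ≃ₗᵢ[ℝ] EuclideanSpace ℝ (Fin n), Measure.map O μ = μ)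
    {u : EuclideanSpace ℝ (Fin n)} (hu : ‖u‖ ^ 2 = n) :
    ∫ x, Real.exp (inner ℝ u x) ∂μ ≤ Real.exp (R ^ 2 / 2) := by
  have h := integral_exp_eq hs hrot 1 (u := u) (by simpa using hu) 1
  have h' : ∫ x, Real.exp (inner ℝ u x) ∂μ = ∫ x, ∏ i, Real.cosh (x i) ∂μ := by
    apply Complex.ofReal_injective
    rw [← integral_complex_ofReal, ← integral_complex_ofReal]
    simpa using h
  rw [h']
  calc ∫ x, ∏ i, Real.cosh (x i) ∂μ ≤ ∫ x, Real.exp (R ^ 2 / 2) ∂μ := by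
        refine integral_mono_ae (integrable_cont hs (by fun_prop)) (integrable_const _) ?_
        filter_upwards [ae_norm hs] with x hx
        rw [← hx, EuclideanSpace.real_norm_sq_eq, Finset.sum_div, Real.exp_sum]
        exact Finset.prod_le_prod (fun i _ => (Real.cosh_pos _).le)
          (fun i _ => Real.cosh_le_exp_half_sq _)
    _ = _ := by simp

lemma integral_pow_four_le [IsProbabilityMeasure μ]
    (hs : μ (Metric.sphere (0 : EuclideanSpace ℝ (Fin n)) R)ᶜ = 0)
    (hrot : ∀ O : EuclideanSpace ℝ (Fin n) ≃ₗᵢ[ℝ] EuclideanSpace ℝ (Fin n), Measure.map O μ = μ)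
    (i : Fin n) :
    (n : ℝ) ^ 2 * ∫ x, x i ^ 4 ∂μ ≤ 48 * Real.exp (R ^ 2 / 2) := by
  set u : EuclideanSpace ℝ (Fin n) := EuclideanSpace.single i (Real.sqrt n) with hu
  have hn : ‖u‖ ^ 2 = n := by
    rw [hu, EuclideanSpace.norm_single]
    simp
  have h1 := integral_rexp_le hs hrot hn
  have h2 := integral_rexp_le hs hrot (u := -u) (by rw [norm_neg, hn])
  have hi : ∀ x, inner ℝ u x = Real.sqrt n * x i := by
    intro x
    rw [hu, EuclideanSpace.inner_single_left]
    simp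
  have hp : ∀ y : ℝ, y ^ 4 ≤ 24 * (Real.exp y + Real.exp (-y)) := by
    intro y
    have := Real.pow_div_factorial_le_exp _ (abs_nonneg y) 4
    rw [Even.pow_abs (by decide) y] at this
    have h3 : Real.exp |y| ≤ Real.exp y + Real.exp (-y) := by
      rcases abs_cases y with h | h <;> rw [h.1]
      · linarith [Real.exp_pos (-y)]
      · linarith [Real.exp_pos y]
    norm_num [Nat.factorial] at this
    linarith
  have i1 : Integrable (fun x => Real.exp (inner ℝ u x)) μ := integrable_cont hs (by fun_prop)
  have i2 : Integrable (fun x => Real.exp (inner ℝ (-u) x)) μ := integrable_cont hs (by fun_prop)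
  calc (n : ℝ) ^ 2 * ∫ x, x i ^ 4 ∂μ = ∫ x, (n : ℝ) ^ 2 * x i ^ 4 ∂μ := by
        rw [integral_const_mul]
    _ ≤ ∫ x, 24 * (Real.exp (inner ℝ u x) + Real.exp (inner ℝ (-u) x)) ∂μ := by
        refine integral_mono (integrable_cont hs (by fun_prop)) ((i1.add i2).const_mul 24) ?_
        intro x
        have := hp (inner ℝ u x)
        rw [← inner_neg_left] at this
        refine le_trans (le_of_eq ?_) this
        rw [hi, mul_pow]
        have : Real.sqrt n ^ 4 = (n : ℝ) ^ 2 := by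
          rw [show 4 = 2 * 2 from rfl, pow_mul, Real.sq_sqrt (by positivity)]
        rw [this]
    _ ≤ _ := by
        rw [integral_const_mul, integral_add i1 i2]
        linarith

lemma charFun_bound [IsProbabilityMeasure μ] (hn : 1 ≤ n)
    (hs : μ (Metric.sphere (0 : EuclideanSpace ℝ (Fin n)) R)ᶜ = 0)
    (hrot : ∀ O : EuclideanSpace ℝ (Fin n) ≃ₗᵢ[ℝ] EuclideanSpace ℝ (Fin n), Measure.map O μ = μ)
    (s : ℝ) {u : EuclideanSpace ℝ (Fin n)} (hu : ‖u‖ ^ 2 = s ^ 2 * n) :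
    ‖∫ x, Complex.exp (Complex.I * (inner ℝ u x : ℝ)) ∂μ -
      (Real.exp (-(s ^ 2 * R ^ 2) / 2) : ℂ)‖ ≤ 2 * s ^ 4 * (48 * Real.exp (R ^ 2 / 2)) / n := by
  rw [integral_exp_eq hs hrot s hu]
  have e : ∫ x, ∏ i, Complex.cosh (Complex.I * s * x i) ∂μ =
      ((∫ x, ∏ i, Real.cos (s * x i) ∂μ : ℝ) : ℂ) := by
    rw [← integral_complex_ofReal]
    congr 1
    ext x
    push_cast
    refine Finset.prod_congr rfl fun i _ => ?_
    rw [← Complex.cosh_mul_I]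
    congr 1
    ring
  rw [e, ← Complex.ofReal_sub, Complex.norm_real, Real.norm_eq_abs]
  have hn0 : (0 : ℝ) < n := by exact_mod_cast hn
  have e2 : ∫ x, ∏ i, Real.cos (s * x i) ∂μ - Real.exp (-(s ^ 2 * R ^ 2) / 2) =
      ∫ x, (∏ i, Real.cos (s * x i) - Real.exp (-(s ^ 2 * R ^ 2) / 2)) ∂μ := by
    rw [integral_sub (integrable_cont hs (by fun_prop)) (integrable_const _)]
    simp
  rw [e2]
  refine (abs_integral_le_integral_abs).trans ?_
  calc _ ≤ ∫ x, 2 * s ^ 4 * ∑ i, x i ^ 4 ∂μ := by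
        refine integral_mono_ae (integrable_cont hs (by fun_prop))
          (integrable_cont hs (by fun_prop)) ?_
        filter_upwards [ae_norm hs] with x hx
        exact prod_cos_sub_le s R x hx
    _ = 2 * s ^ 4 * ∑ i, ∫ x, x i ^ 4 ∂μ := by
        rw [integral_const_mul, integral_finsetSum]
        intro i _
        exact integrable_cont hs (by fun_prop)
    _ ≤ 2 * s ^ 4 * ∑ i : Fin n, (48 * Real.exp (R ^ 2 / 2)) / n ^ 2 := by
        gcongr with i
        rw [le_div_iff₀ (by positivity), mul_comm]
        exact integral_pow_four_le hs hrot i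
    _ = _ := by
        simp
        field_simp

end

end LevySphere


/-- Wiener's 1923 "differential space" result: if `σ n` is the uniform (normalized surface)
probability measure on the sphere of radius `R` in `ℝⁿ` (characterized as the unique
rotation-invariant probability measure carried by the sphere), and
`Sₙ(x) = x₁ + ⋯ + x_{⌊na⌋}`, then the pushforward measures `(Sₙ)_* σₙ` converge weakly to
the Gaussian measure on `ℝ` with mean `0` and variance `a·R²`. -/
theorem levy_sphere_partial_sums_to_gaussian (R a : ℝ) (hR : 0 < R)
    (ha : a ∈ Set.Ioc (0:ℝ) 1)
    (σ : ∀ n : ℕ, Measure (EuclideanSpace ℝ (Fin n)))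
    (hprob : ∀ n, 1 ≤ n → IsProbabilityMeasure (σ n))
    (hsphere : ∀ n, 1 ≤ n → σ n (Metric.sphere (0 : EuclideanSpace ℝ (Fin n)) R)ᶜ = 0)
    (hrot : ∀ n, 1 ≤ n → ∀ O : EuclideanSpace ℝ (Fin n) ≃ₗᵢ[ℝ] EuclideanSpace ℝ (Fin n),
      Measure.map O (σ n) = σ n)
    (S : ∀ n : ℕ, EuclideanSpace ℝ (Fin n) → ℝ)
    (hS : ∀ n (x : EuclideanSpace ℝ (Fin n)),
      S n x = ∑ i ∈ Finset.univ.filter (fun i : Fin n => (i : ℕ) < ⌊(n : ℝ) * a⌋₊), x i) :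
    ∀ g : BoundedContinuousFunction ℝ ℝ,
      Tendsto (fun n : ℕ => ∫ y, g y ∂((σ n).map (S n))) atTop
        (nhds (∫ y, g y ∂(gaussianReal 0 (Real.toNNReal (a * R ^ 2))))) := by
  classical
  intro g
  rw [← tendsto_add_atTop_iff_nat 1]
  have hP : ∀ n : ℕ, IsProbabilityMeasure (σ (n + 1)) := fun n => hprob _ (by omega)
  have hSc : ∀ n, Continuous (S n) := by
    intro n
    rw [show S n = _ from funext (hS n)]
    fun_prop
  have hPm : ∀ n : ℕ, IsProbabilityMeasure ((σ (n + 1)).map (S (n + 1))) := fun n =>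
    Measure.isProbabilityMeasure_map (hSc _).aemeasurable
  let P : ℕ → ProbabilityMeasure ℝ := fun n => ⟨(σ (n + 1)).map (S (n + 1)), hPm n⟩
  let Q : ProbabilityMeasure ℝ := ⟨gaussianReal 0 (Real.toNNReal (a * R ^ 2)), inferInstance⟩
  suffices h : Tendsto P atTop (nhds Q) from
    (ProbabilityMeasure.tendsto_iff_forall_integral_tendsto.mp h) g
  refine ProbabilityMeasure.tendsto_iff_tendsto_charFun.mpr fun t => ?_
  change Tendsto (fun n => charFun ((σ (n + 1)).map (S (n + 1))) t) atTop
    (nhds (charFun (gaussianReal 0 (Real.toNNReal (a * R ^ 2))) t))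
  have haR : 0 ≤ a * R ^ 2 := mul_nonneg ha.1.le (sq_nonneg R)
  rw [charFun_gaussianReal]
  -- the scaling parameter
  let q : ℕ → ℝ := fun n => (⌊((n + 1 : ℕ) : ℝ) * a⌋₊ : ℝ) / ((n + 1 : ℕ) : ℝ)
  have hq : Tendsto q atTop (nhds a) := by
    have h1 := (tendsto_nat_floor_mul_div_atTop (R := ℝ) ha.1.le).comp
      (tendsto_natCast_atTop_atTop (R := ℝ))
    have h2 := (tendsto_add_atTop_iff_nat 1).mpr h1
    refine h2.congr fun n => ?_
    simp only [q, Function.comp, mul_comm a]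
  have hq0 : ∀ n, 0 ≤ q n := fun n => by positivity
  let s : ℕ → ℝ := fun n => t * Real.sqrt (q n)
  have hs2 : ∀ n, s n ^ 2 = t ^ 2 * q n := fun n => by
    simp only [s, mul_pow, Real.sq_sqrt (hq0 n)]
  have hs4 : ∀ n, s n ^ 4 = t ^ 4 * q n ^ 2 := fun n => by
    rw [show 4 = 2 * 2 from rfl, pow_mul, hs2]; ring
  have key : ∀ n, ‖charFun ((σ (n + 1)).map (S (n + 1))) t -
      (Real.exp (-(s n ^ 2 * R ^ 2) / 2) : ℂ)‖ ≤
      2 * s n ^ 4 * (48 * Real.exp (R ^ 2 / 2)) / ((n + 1 : ℕ) : ℝ) := by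
    intro n
    let k := ⌊((n + 1 : ℕ) : ℝ) * a⌋₊
    have hk : k ≤ n + 1 := by
      apply Nat.floor_le_of_le
      have : (0 : ℝ) ≤ ((n + 1 : ℕ) : ℝ) := by positivity
      nlinarith [ha.2]
    let u : EuclideanSpace ℝ (Fin (n + 1)) :=
      WithLp.toLp 2 (fun i : Fin (n + 1) => if (i : ℕ) < k then t else 0)
    have hu : ‖u‖ ^ 2 = s n ^ 2 * ((n + 1 : ℕ) : ℝ) := by
      rw [EuclideanSpace.real_norm_sq_eq, hs2]
      have h1 : ∀ i, u i ^ 2 = if (i : ℕ) < k then t ^ 2 else 0 := by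
        intro i
        simp only [u]
        split_ifs <;> simp
      rw [Finset.sum_congr rfl fun i _ => h1 i, ← Finset.sum_filter, Finset.sum_const,
        Fin.card_filter_val_lt, min_eq_right hk]
      have : (0 : ℝ) < ((n + 1 : ℕ) : ℝ) := by positivity
      simp only [q, k, nsmul_eq_mul]
      field_simp
    have hb := LevySphere.charFun_bound (by omega) (hsphere (n + 1) (by omega))
      (hrot (n + 1) (by omega)) (s n) hu
    refine le_trans (le_of_eq ?_) hb
    congr 2
    rw [charFun_apply_real, integral_map (hSc _).aemeasurable (by fun_prop)]
    congr 1
    ext x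
    have : inner ℝ u x = t * S (n + 1) x := by
      rw [hS, PiLp.inner_apply, Finset.mul_sum, Finset.sum_filter]
      refine Finset.sum_congr rfl fun i _ => ?_
      simp only [u, k]
      split_ifs <;> simp [mul_comm]
    rw [this]
    congr 1
    push_cast
    ring
  have hlim : Tendsto (fun n => (Real.exp (-(s n ^ 2 * R ^ 2) / 2) : ℂ)) atTop
      (nhds (Real.exp (-(t ^ 2 * a * R ^ 2) / 2) : ℂ)) := by
    simp_rw [hs2]
    refine (Complex.continuous_ofReal.tendsto _).comp ((Real.continuous_exp.tendsto _).comp ?_)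
    exact (((hq.const_mul (t ^ 2)).mul_const (R ^ 2)).neg).div_const 2
  have herr : Tendsto (fun n : ℕ => 2 * s n ^ 4 * (48 * Real.exp (R ^ 2 / 2)) / ((n + 1 : ℕ) : ℝ))
      atTop (nhds 0) := by
    simp_rw [hs4]
    refine Tendsto.div_atTop ((((hq.pow 2).const_mul (t ^ 4)).const_mul 2).mul_const _) ?_
    exact (tendsto_natCast_atTop_atTop (R := ℝ)).comp (tendsto_add_atTop_nat 1)
  have hd := squeeze_zero_norm key herr
  have := hd.add hlim
  simp only [sub_add_cancel, zero_add] at this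
  convert! this using 2
  rw [Complex.ofReal_exp]
  congr 1
  rw [Real.coe_toNNReal _ haR]
  push_cast
  ring
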